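/- Let θ > 0 and s ≥ 0, and define f_θ(s) = (1+θ)s²/(1+θs). Then min(s, s²) ≤ f_θ(s) ≤ max(s, s²). Consequently, for any matrix B ∈ ℝ^{n×m} all of whose rows satisfy ‖B_{i,:}‖₂ ≤ 1, one has ‖B‖_F² ≤ ‖B‖_θ ≤ ‖B‖_{2,1}. -/

import Mathlib

open Finset

/-- The Euclidean norm of the `i`-th row of a matrix `B`. -/
noncomputable def rowNorm {n m : ℕ} (B : Fin n → Fin m → ℝ) (i : Fin n) : ℝ :=
  Real.sqrt (∑ j, B i j ^ 2)

/-- The `θ`-norm `‖B‖_θ = ∑ i, (1+θ)‖B_{i,:}‖₂² / (1 + θ‖B_{i,:}‖₂)`. -/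
noncomputable def thetaNorm {n m : ℕ} (θ : ℝ) (B : Fin n → Fin m → ℝ) : ℝ :=
  ∑ i, (1 + θ) * rowNorm B i ^ 2 / (1 + θ * rowNorm B i)

/-- The row penalty `f_θ`, so that `‖B‖_θ = ∑ i, f_θ(‖B_{i,:}‖₂)`. The denominator vanishes when
`θ * s = -1`, where the value is the junk value `0`. -/
def thetaFun {K : Type*} [Field K] (θ s : K) : K :=
  (1 + θ) * s ^ 2 / (1 + θ * s)

section thetaFun

variable {K : Type*} [Field K] [LinearOrder K] [IsStrictOrderedRing K] {θ s : K}

-- `f_θ(s)` is the average of `s` and `s²` with weights proportional to `θ s` and `1`.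
theorem thetaFun_mem_segment (h : 0 ≤ θ * s) : thetaFun θ s ∈ segment K s (s ^ 2) := by
  have hden : 0 < 1 + θ * s := by linarith
  refine ⟨θ * s / (1 + θ * s), 1 / (1 + θ * s), div_nonneg h hden.le,
    one_div_nonneg.2 hden.le, ?_, ?_⟩
  · rw [← add_div, add_comm, div_self hden.ne']
  · simp only [thetaFun, smul_eq_mul]
    ring

theorem thetaFun_mem_uIcc (h : 0 ≤ θ * s) : thetaFun θ s ∈ Set.uIcc s (s ^ 2) :=
  segment_eq_uIcc s (s ^ 2) ▸ thetaFun_mem_segment h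

theorem thetaFun_mem_Icc_of_le_one (hθ : 0 ≤ θ) (hs₀ : 0 ≤ s) (hs₁ : s ≤ 1) :
    thetaFun θ s ∈ Set.Icc (s ^ 2) s :=
  Set.uIcc_of_ge (pow_le_of_le_one hs₀ hs₁ two_ne_zero) ▸ thetaFun_mem_uIcc (mul_nonneg hθ hs₀)

end thetaFun

section Matrix

variable {n m : ℕ} {θ : ℝ} {B : Fin n → Fin m → ℝ}

theorem rowNorm_nonneg (B : Fin n → Fin m → ℝ) (i : Fin n) : 0 ≤ rowNorm B i :=
  Real.sqrt_nonneg _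

theorem rowNorm_sq (B : Fin n → Fin m → ℝ) (i : Fin n) : rowNorm B i ^ 2 = ∑ j, B i j ^ 2 :=
  Real.sq_sqrt (sum_nonneg fun _ _ => sq_nonneg _)

theorem thetaNorm_eq_sum_thetaFun (θ : ℝ) (B : Fin n → Fin m → ℝ) :
    thetaNorm θ B = ∑ i, thetaFun θ (rowNorm B i) :=
  rfl

theorem sum_sq_le_thetaNorm (hθ : 0 ≤ θ) (hB : ∀ i, rowNorm B i ≤ 1) :
    ∑ i, ∑ j, B i j ^ 2 ≤ thetaNorm θ B := by
  simp only [← rowNorm_sq, thetaNorm_eq_sum_thetaFun]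
  exact sum_le_sum fun i _ => (thetaFun_mem_Icc_of_le_one hθ (rowNorm_nonneg B i) (hB i)).1

theorem thetaNorm_le_sum_rowNorm (hθ : 0 ≤ θ) (hB : ∀ i, rowNorm B i ≤ 1) :
    thetaNorm θ B ≤ ∑ i, rowNorm B i := by
  rw [thetaNorm_eq_sum_thetaFun]
  exact sum_le_sum fun i _ => (thetaFun_mem_Icc_of_le_one hθ (rowNorm_nonneg B i) (hB i)).2

end Matrix

/-- For `θ > 0` and `s ≥ 0`, `min(s,s²) ≤ f_θ(s) ≤ max(s,s²)` where
`f_θ(s) = (1+θ)s²/(1+θs)`. Consequently, for any matrix `B` all of whose rows satisfy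
`‖B_{i,:}‖₂ ≤ 1`, one has `‖B‖_F² ≤ ‖B‖_θ ≤ ‖B‖_{2,1}`. -/
theorem stmt_11 {n m : ℕ} (θ : ℝ) (hθ : 0 < θ) :
    (∀ s : ℝ, 0 ≤ s →
      min s (s ^ 2) ≤ (1 + θ) * s ^ 2 / (1 + θ * s) ∧
        (1 + θ) * s ^ 2 / (1 + θ * s) ≤ max s (s ^ 2)) ∧
    ∀ B : Fin n → Fin m → ℝ, (∀ i, rowNorm B i ≤ 1) →
      (∑ i, ∑ j, B i j ^ 2) ≤ thetaNorm θ B ∧ thetaNorm θ B ≤ ∑ i, rowNorm B i :=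
  ⟨fun _ hs => thetaFun_mem_uIcc (mul_nonneg hθ.le hs),
    fun _ hB => ⟨sum_sq_le_thetaNorm hθ.le hB, thetaNorm_le_sum_rowNorm hθ.le hB⟩⟩
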